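/- Let H be a real Hilbert space, A, B : H → Set H monotone operators, R ∈ ℕ with R ≥ 1, and jA, jB : H → H resolvents of A, B with parameter 1/R. Let (y_n) be generated by the exact method of alternating resolvents (MAR*) with data u, x₀ ∈ H, (α_n), (λ_n) ⊂ (0,1) and (β_n), (μ_n) ⊂ (0,∞). Let q ∈ H satisfy 0 ∈ A(q) and 0 ∈ B(q), and let N ∈ ℕ, N ≥ 1, satisfy N ≥ max{2‖u − q‖, ‖x₀ − q‖, ‖q‖}. Assume η : ℕ × (ℕ→ℕ) → ℕ is a monotone functional such that for all k ∈ ℕ and all monotone f : ℕ → ℕ there is n ≤ η(k,f) with ‖jA(y_m) − y_m‖ ≤ 1/(k+1) and ‖jB(y_m) − y_m‖ ≤ 1/(k+1) for all m ∈ [n, f(n)]. Then for every k ∈ ℕ and every monotone f : ℕ → ℕ there exist n ≤ Ω_η(k,f) and x ∈ H with ‖x − q‖ ≤ N such that ‖jA(x) − x‖ ≤ 1/(f(n)+1), ‖jB(x) − x‖ ≤ 1/(f(n)+1), and ⟨u − x, y_m − x⟩ ≤ 1/(k+1) for all m ∈ [n, f(n)]. Here Ω_η(k,f) := η(ζ(k,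 f̂), f) with f̂(m) := f(η(m,f)), and ζ(k,f) := 24N·(w_{f,N}^{(E)}(0)+1)² where w_{f,N}(m) := max{f(24N(m+1)²), 24N(m+1)²}, E := 4N⁴(k+1)², and w^{(E)} denotes the E-fold iterate. -/

import Mathlib

/-!
The proof is a quantitative projection argument. Write `S(ε)` for the set of points `x` of the
closed ball of radius `N` about `q` with `‖jA x - x‖ ≤ ε` and `‖jB x - x‖ ≤ ε`. Since `q` lies in
every `S(ε)`, a descent in the values of `‖u - ·‖²` along the precisions `1/(w^[i](0)+1)` must stop
within `E = 4N⁴(k+1)²` steps (`exists_almost_minimizer`). This gives a point `x` at one precision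
that almost minimizes `‖u - ·‖²` over the set of the next, coarser precision.

Resolvents are nonexpansive, so approximate fixed points are stable under convex combinations up to
a quadratic loss of precision (`norm_map_segment_sub_le`); comparing `x` with a short segment
towards an approximate fixed point `z` turns almost-minimality into `⟪u - x, z - x⟫ ≤ 1/(k+1)`
(`exists_approx_projection`). The MAR* sequence stays in the ball (`MAR.norm_sub_le`), and the
rate `η` supplies an interval on which its terms are admissible as `z`.
-/

open scoped RealInnerProductSpace

/-- A set-valued operator on a real Hilbert space is monotone. -/
def MonotoneOp {H : Type*} [NormedAddCommGroup H] [InnerProductSpace ℝ H]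
    (A : H → Set H) : Prop :=
  ∀ x x' y y' : H, y ∈ A x → y' ∈ A x' → 0 ≤ ⟪x - x', y - y'⟫

/-- `j` is the resolvent of `A` with parameter `1/R`. -/
def IsResolvent {H : Type*} [NormedAddCommGroup H] [InnerProductSpace ℝ H]
    (A : H → Set H) (R : ℕ) (j : H → H) : Prop :=
  ∀ x : H, (R : ℝ) • (x - j x) ∈ A (j x)

/-- `(y n)` is generated by the exact method of alternating resolvents (MAR*). -/
def MAR {H : Type*} [NormedAddCommGroup H] [InnerProductSpace ℝ H]
    (A B : H → Set H) (u x₀ : H) (α lam β μ : ℕ → ℝ) (y : ℕ → H) : Prop :=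
  y 0 = x₀ ∧ ∀ n : ℕ,
    (1 / β n) • (α n • u + (1 - α n) • y (2*n) - y (2*n+1)) ∈ A (y (2*n+1)) ∧
    (1 / μ n) • (lam n • u + (1 - lam n) • y (2*n+1) - y (2*n+2)) ∈ B (y (2*n+2))

/-- `g ≤* f`: strong majorizability. -/
def StrongMaj (g f : ℕ → ℕ) : Prop :=
  ∀ m n : ℕ, m ≤ n → g m ≤ f n ∧ f m ≤ f n

/-- A functional `φ : ℕ × (ℕ→ℕ) → ℕ` is monotone. -/
def MonoFunctional (φ : ℕ → (ℕ → ℕ) → ℕ) : Prop :=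
  ∀ (m n : ℕ) (f g : ℕ → ℕ), m ≤ n → StrongMaj g f → φ m g ≤ φ n f

/-- The bound `ζ(k,f) = 24N (w_{f,N}^{(E)}(0)+1)²`. -/
def zetaBound (N k : ℕ) (f : ℕ → ℕ) : ℕ :=
  24 * N *
    (((fun m => max (f (24*N*(m+1)^2)) (24*N*(m+1)^2))^[4*N^4*(k+1)^2] 0) + 1)^2

/-- The bound `Ω_η(k,f) = η(ζ(k,f̂),f)` with `f̂(m) = f(η(m,f))`. -/
def OmegaBound (N : ℕ) (η : ℕ → (ℕ → ℕ) → ℕ) (k : ℕ) (f : ℕ → ℕ) : ℕ :=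
  η (zetaBound N k (fun m => f (η m f))) f

/-- The resolvent inequality: moving from `v` to the point `p` with `c • (v - p) ∈ A p` is a
nonexpansive operation. -/
lemma MonotoneOp.norm_sub_le {H : Type*} [NormedAddCommGroup H] [InnerProductSpace ℝ H]
    {A : H → Set H} (hA : MonotoneOp A) {c : ℝ} (hc : 0 < c) {v p v' p' : H}
    (h : c • (v - p) ∈ A p) (h' : c • (v' - p') ∈ A p') : ‖p - p'‖ ≤ ‖v - v'‖ := by
  have h0 := hA _ _ _ _ h h'
  rw [← smul_sub, real_inner_smul_right] at h0
  have h1 : 0 ≤ ⟪p - p', v - p - (v' - p')⟫ := nonneg_of_mul_nonneg_right h0 hc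
  have h2 : v - p - (v' - p') = (v - v') - (p - p') := by abel
  rw [h2, inner_sub_right, real_inner_self_eq_norm_sq] at h1
  have h3 := real_inner_le_norm (p - p') (v - v')
  by_contra! hlt
  have h4 : 0 < ‖p - p'‖ := (norm_nonneg _).trans_lt hlt
  nlinarith

lemma IsResolvent.nonexpansive {H : Type*} [NormedAddCommGroup H] [InnerProductSpace ℝ H]
    {A : H → Set H} (hA : MonotoneOp A) {R : ℕ} (hR : 1 ≤ R) {j : H → H}
    (hj : IsResolvent A R j) (x z : H) : ‖j x - j z‖ ≤ ‖x - z‖ :=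
  hA.norm_sub_le (c := R) (by exact_mod_cast hR) (hj x) (hj z)

lemma IsResolvent.map_zero_eq {H : Type*} [NormedAddCommGroup H] [InnerProductSpace ℝ H]
    {A : H → Set H} (hA : MonotoneOp A) {R : ℕ} (hR : 1 ≤ R) {j : H → H}
    (hj : IsResolvent A R j) {q : H} (hq : (0 : H) ∈ A q) : j q = q := by
  have h := hA.norm_sub_le (c := R) (by exact_mod_cast hR) (hj q)
    (v' := q) (p' := q) (by simpa using hq)
  simpa [sub_eq_zero] using h

/-- The MAR* iterates stay in every ball about a common zero `q` that contains `u` and `x₀`. -/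
lemma MAR.norm_sub_le {H : Type*} [NormedAddCommGroup H] [InnerProductSpace ℝ H]
    {A B : H → Set H} (hA : MonotoneOp A) (hB : MonotoneOp B)
    {u x₀ : H} {α lam β μ : ℕ → ℝ}
    (hα : ∀ n, α n ∈ Set.Ioo (0:ℝ) 1) (hlam : ∀ n, lam n ∈ Set.Ioo (0:ℝ) 1)
    (hβ : ∀ n, 0 < β n) (hμ : ∀ n, 0 < μ n)
    {y : ℕ → H} (hy : MAR A B u x₀ α lam β μ y)
    {q : H} (hqA : (0:H) ∈ A q) (hqB : (0:H) ∈ B q) {C : ℝ}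
    (hu : ‖u - q‖ ≤ C) (hx₀ : ‖x₀ - q‖ ≤ C) (n : ℕ) : ‖y n - q‖ ≤ C := by
  have step : ∀ {D : H → Set H}, MonotoneOp D → (0:H) ∈ D q → ∀ {a b : ℝ} {v p : H},
      a ∈ Set.Ioo (0:ℝ) 1 → 0 < b → (1 / b) • (a • u + (1 - a) • v - p) ∈ D p →
      ‖v - q‖ ≤ C → ‖p - q‖ ≤ C := by
    intro D hD hq a b v p ha hb hp hv
    have h1 := hD.norm_sub_le (one_div_pos.2 hb) hp (v' := q) (p' := q) (by simpa using hq)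
    have h2 : a • u + (1 - a) • v ∈ Metric.closedBall q C :=
      convex_closedBall q C (mem_closedBall_iff_norm.2 hu) (mem_closedBall_iff_norm.2 hv)
        ha.1.le (by linarith [ha.2]) (by ring)
    exact h1.trans (mem_closedBall_iff_norm.1 h2)
  have main : ∀ n, ‖y (2*n) - q‖ ≤ C ∧ ‖y (2*n+1) - q‖ ≤ C := by
    intro n
    induction n with
    | zero =>
      have h0 : ‖y (2*0) - q‖ ≤ C := by simpa [hy.1] using hx₀
      exact ⟨h0, step hA hqA (hα 0) (hβ 0) (hy.2 0).1 h0⟩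
    | succ n ih =>
      have h0 : ‖y (2*(n+1)) - q‖ ≤ C := step hB hqB (hlam n) (hμ n) (hy.2 n).2 ih.2
      exact ⟨h0, step hA hqA (hα (n+1)) (hβ (n+1)) (hy.2 (n+1)).1 h0⟩
  obtain ⟨m, rfl | rfl⟩ := Nat.even_or_odd' n
  · exact (main m).1
  · exact (main m).2

/-- For nonexpansive `T`, a point on the segment between two `δ`-approximate fixed points at
distance at most `d` satisfies `‖T p - p‖² ≤ d δ + δ²`. -/
lemma norm_map_segment_sub_sq_le {H : Type*} [NormedAddCommGroup H] [InnerProductSpace ℝ H]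
    {T : H → H} (hT : ∀ x z, ‖T x - T z‖ ≤ ‖x - z‖) {x z : H} {δ t d : ℝ}
    (hx : ‖T x - x‖ ≤ δ) (hz : ‖T z - z‖ ≤ δ) (ht0 : 0 ≤ t) (ht1 : t ≤ 1) (hd : ‖z - x‖ ≤ d) :
    ‖T (x + t • (z - x)) - (x + t • (z - x))‖ ^ 2 ≤ d * δ + δ ^ 2 := by
  set p := x + t • (z - x) with hp
  have hδ : 0 ≤ δ := (norm_nonneg _).trans hx
  have e1 : ‖T p - x‖ ≤ t * ‖z - x‖ + δ := by
    have h1 : ‖p - x‖ = t * ‖z - x‖ := by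
      rw [hp, add_sub_cancel_left, norm_smul, Real.norm_of_nonneg ht0]
    have h2 := norm_sub_le_norm_sub_add_norm_sub (T p) (T x) x
    linarith [hT p x]
  have e2 : ‖T p - z‖ ≤ (1 - t) * ‖z - x‖ + δ := by
    have h1 : ‖p - z‖ = (1 - t) * ‖z - x‖ := by
      have : p - z = (1 - t) • (x - z) := by rw [hp]; module
      rw [this, norm_smul, Real.norm_of_nonneg (by linarith), norm_sub_rev]
    have h2 := norm_sub_le_norm_sub_add_norm_sub (T p) (T z) z
    linarith [hT p z]
  have e3 : ‖T p - p‖ ^ 2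
      = (1 - t) * ‖T p - x‖ ^ 2 + t * ‖T p - z‖ ^ 2 - t * (1 - t) * ‖z - x‖ ^ 2 := by
    have h1 : T p - p = (T p - x) - t • (z - x) := by rw [hp]; abel
    have h2 : T p - z = (T p - x) - (z - x) := by abel
    rw [h1, h2, norm_sub_sq_real (T p - x), norm_sub_sq_real (T p - x), norm_smul, real_inner_smul_right,
      Real.norm_of_nonneg ht0]
    ring
  have f1 : ‖T p - x‖ ^ 2 ≤ (t * ‖z - x‖ + δ) ^ 2 := by gcongr
  have f2 : ‖T p - z‖ ^ 2 ≤ ((1 - t) * ‖z - x‖ + δ) ^ 2 := by gcongr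
  have g1 := mul_le_mul_of_nonneg_left f1 (sub_nonneg.2 ht1)
  have g2 := mul_le_mul_of_nonneg_left f2 ht0
  have h4 : 4 * (t * (1 - t)) ≤ 1 := by nlinarith [sq_nonneg (2 * t - 1)]
  have h5 : 4 * (t * (1 - t)) * (‖z - x‖ * δ) ≤ 1 * (d * δ) := by gcongr
  rw [e3]
  linarith

/-- Approximate fixed points in a ball of diameter `2N` are stable under convex combinations: the
precision `1/(24N(a+1)²+1)` at the endpoints gives precision `1/(a+1)` on the segment. -/
lemma norm_map_segment_sub_le {H : Type*} [NormedAddCommGroup H] [InnerProductSpace ℝ H]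
    {T : H → H} (hT : ∀ x z, ‖T x - T z‖ ≤ ‖x - z‖) {x z : H} {t : ℝ} {N a : ℕ} (hN : 1 ≤ N)
    (hx : ‖T x - x‖ ≤ 1 / (((24 * N * (a + 1) ^ 2 : ℕ) : ℝ) + 1))
    (hz : ‖T z - z‖ ≤ 1 / (((24 * N * (a + 1) ^ 2 : ℕ) : ℝ) + 1))
    (ht0 : 0 ≤ t) (ht1 : t ≤ 1) (hd : ‖z - x‖ ≤ 2 * N) :
    ‖T (x + t • (z - x)) - (x + t • (z - x))‖ ≤ 1 / ((a : ℝ) + 1) := by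
  have h := norm_map_segment_sub_sq_le hT hx hz ht0 ht1 hd
  set δ : ℝ := 1 / (((24 * N * (a + 1) ^ 2 : ℕ) : ℝ) + 1) with hδ
  have hN' : (1 : ℝ) ≤ N := by exact_mod_cast hN
  have hδ0 : 0 ≤ δ := by positivity
  have hM : (0 : ℝ) ≤ ((24 * N * (a + 1) ^ 2 : ℕ) : ℝ) := Nat.cast_nonneg _
  have hδ1 : δ ≤ 1 := by
    rw [hδ, div_le_one (by linarith)]; linarith
  have h1 : 3 * N * δ ≤ (1 / ((a : ℝ) + 1)) ^ 2 := by
    rw [hδ, one_div_pow, mul_one_div, div_le_div_iff₀ (by linarith) (by positivity)]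
    push_cast
    have : (0 : ℝ) ≤ N * ((a : ℝ) + 1) ^ 2 := by positivity
    nlinarith
  refine le_of_sq_le_sq ?_ (by positivity)
  nlinarith

/-- If `φ ≥ 0` and `φ x < n ε`, then descending from `x ∈ S n` by more than `ε` at each passage from
`S (i+1)` to `S i` is impossible all the way down, so some point `x'` of some `S (i+1)` minimizes
`φ` over `S i` up to `ε`. -/
lemma exists_almost_minimizer {X : Type*} (S : ℕ → Set X) (φ : X → ℝ) (hφ : ∀ x, 0 ≤ φ x) (ε : ℝ)
    (n : ℕ) (x : X) (hx : x ∈ S n) (hlt : φ x < n * ε) :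
    ∃ i < n, ∃ x' ∈ S (i + 1), ∀ z ∈ S i, φ x' ≤ φ z + ε := by
  induction n generalizing x with
  | zero =>
    have := hφ x
    simp only [Nat.cast_zero, zero_mul] at hlt
    linarith
  | succ n ih =>
    by_cases h : ∀ z ∈ S n, φ x ≤ φ z + ε
    · exact ⟨n, n.lt_succ_self, x, hx, h⟩
    · push Not at h
      obtain ⟨z, hz, hlt'⟩ := h
      push_cast at hlt
      obtain ⟨i, hi, r⟩ := ih z hz (by linarith)
      exact ⟨i, hi.trans n.lt_succ_self, r⟩

/-- Quantitative projection of `u` onto the common fixed points of two nonexpansive maps: for some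
`m ≤ ζ(k,f)` there is a `1/(f(m)+1)`-approximate common fixed point `x` satisfying the variational
inequality up to `1/(k+1)` against all `1/(m+1)`-approximate common fixed points of the ball. -/
lemma exists_approx_projection {H : Type*} [NormedAddCommGroup H] [InnerProductSpace ℝ H]
    {S T : H → H} (hS : ∀ x z, ‖S x - S z‖ ≤ ‖x - z‖) (hT : ∀ x z, ‖T x - T z‖ ≤ ‖x - z‖)
    {u q : H} (hqS : S q = q) (hqT : T q = q) {N : ℕ} (hN1 : 1 ≤ N) (hN : 2 * ‖u - q‖ ≤ N)
    (k : ℕ) (f : ℕ → ℕ) :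
    ∃ m ≤ zetaBound N k f, ∃ x : H, ‖x - q‖ ≤ N ∧
      ‖S x - x‖ ≤ 1 / ((f m : ℝ) + 1) ∧ ‖T x - x‖ ≤ 1 / ((f m : ℝ) + 1) ∧
      ∀ z : H, ‖z - q‖ ≤ N → ‖S z - z‖ ≤ 1 / ((m : ℝ) + 1) → ‖T z - z‖ ≤ 1 / ((m : ℝ) + 1) →
        ⟪u - x, z - x⟫ ≤ 1 / ((k : ℝ) + 1) := by
  have hN' : (1 : ℝ) ≤ N := by exact_mod_cast hN1
  unfold zetaBound
  set w : ℕ → ℕ := fun m => max (f (24*N*(m+1)^2)) (24*N*(m+1)^2) with hw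
  have hwid : id ≤ w := by
    intro m
    have h1 : m ≤ 24 * N * (m + 1) ^ 2 := by nlinarith [Nat.mul_le_mul_right ((m+1)^2) hN1]
    exact h1.trans (le_max_right _ _)
  -- `t` balances the two error terms `ε / (2t)` and `t / 2 * (2N)²`, each being `1 / (2(k+1))`.
  set t : ℝ := 1 / (4 * (N:ℝ) ^ 2 * ((k:ℝ) + 1)) with ht
  set ε : ℝ := 1 / (4 * (N:ℝ) ^ 2 * ((k:ℝ) + 1) ^ 2) with hε
  have ht0 : 0 < t := by positivity
  have hk0 : (0:ℝ) ≤ k := Nat.cast_nonneg k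
  have ht1 : t ≤ 1 := by
    rw [ht, div_le_one (by positivity)]
    nlinarith [sq_nonneg ((N:ℝ) - 1), mul_nonneg (sq_nonneg (N:ℝ)) hk0]
  obtain ⟨i, hi, x, ⟨hxq, hxS, hxT⟩, hmin⟩ := exists_almost_minimizer
    (fun i => {x : H | ‖x - q‖ ≤ N ∧ ‖S x - x‖ ≤ 1 / ((w^[i] 0 : ℕ) + 1 : ℝ) ∧
      ‖T x - x‖ ≤ 1 / ((w^[i] 0 : ℕ) + 1 : ℝ)})
    (fun x => ‖u - x‖ ^ 2) (fun x => sq_nonneg _) ε (4*N^4*(k+1)^2) q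
    (by
      refine ⟨by simp, ?_, ?_⟩
      · rw [hqS, sub_self, norm_zero]; positivity
      · rw [hqT, sub_self, norm_zero]; positivity)
    (by
      have h1 : ((4*N^4*(k+1)^2 : ℕ) : ℝ) * ε = (N:ℝ) ^ 2 := by
        rw [hε]; push_cast; field_simp
      rw [h1]
      nlinarith [norm_nonneg (u - q)])
  set a := w^[i] 0 with ha
  rw [Function.iterate_succ_apply', ← ha] at hxS hxT
  have haE : a ≤ w^[4*N^4*(k+1)^2] 0 := Function.monotone_iterate_of_id_le hwid hi.le 0
  have hwf : ((f (24*N*(a+1)^2) : ℕ) : ℝ) ≤ (w a : ℕ) := by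
    exact_mod_cast le_max_left (f (24*N*(a+1)^2)) (24*N*(a+1)^2)
  have hwm : ((24*N*(a+1)^2 : ℕ) : ℝ) ≤ (w a : ℕ) := by
    exact_mod_cast le_max_right (f (24*N*(a+1)^2)) (24*N*(a+1)^2)
  have hwf' : 1 / ((w a : ℕ) + 1 : ℝ) ≤ 1 / ((f (24*N*(a+1)^2) : ℕ) + 1 : ℝ) := by gcongr
  have hwm' : 1 / ((w a : ℕ) + 1 : ℝ) ≤ 1 / ((24*N*(a+1)^2 : ℕ) + 1 : ℝ) :=
    one_div_le_one_div_of_le (by positivity) (by linarith)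
  refine ⟨24*N*(a+1)^2, by gcongr, x, hxq, hxS.trans hwf', hxT.trans hwf', ?_⟩
  intro z hzq hzS hzT
  have hd : ‖z - x‖ ≤ 2 * N := by
    have := norm_sub_le_norm_sub_add_norm_sub z q x
    rw [norm_sub_rev q x] at this
    linarith
  have hp := hmin (x + t • (z - x)) ⟨by
      refine mem_closedBall_iff_norm.1 ((convex_closedBall q (N:ℝ)).add_smul_sub_mem
        (mem_closedBall_iff_norm.2 hxq) (mem_closedBall_iff_norm.2 hzq) ⟨ht0.le, ht1⟩),
    norm_map_segment_sub_le hS hN1 (hxS.trans hwm') hzS ht0.le ht1 hd,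
    norm_map_segment_sub_le hT hN1 (hxT.trans hwm') hzT ht0.le ht1 hd⟩
  have e : u - (x + t • (z - x)) = (u - x) - t • (z - x) := by abel
  simp only [e] at hp
  rw [norm_sub_sq_real (u - x), real_inner_smul_right, norm_smul,
    Real.norm_of_nonneg ht0.le] at hp
  have hd2 : ‖z - x‖ ^ 2 ≤ (2 * N) ^ 2 := by gcongr
  have hεt : ε = t * (1 / ((k:ℝ) + 1)) := by rw [hε, ht]; field_simp
  have htN : t * (2 * (N:ℝ)) ^ 2 = 1 / ((k:ℝ) + 1) := by rw [ht]; field_simp; norm_num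
  have h6 : t * (t * ‖z - x‖ ^ 2) ≤ t * (1 / ((k:ℝ) + 1)) := by
    rw [← htN]; gcongr
  refine le_of_mul_le_mul_left ?_ ht0
  nlinarith

theorem stmt10 {H : Type*} [NormedAddCommGroup H] [InnerProductSpace ℝ H]
    (A B : H → Set H) (hA : MonotoneOp A) (hB : MonotoneOp B)
    (R : ℕ) (hR : 1 ≤ R) (jA jB : H → H)
    (hjA : IsResolvent A R jA) (hjB : IsResolvent B R jB)
    (u x₀ : H) (α lam β μ : ℕ → ℝ)
    (hα : ∀ n, α n ∈ Set.Ioo (0:ℝ) 1) (hlam : ∀ n, lam n ∈ Set.Ioo (0:ℝ) 1)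
    (hβ : ∀ n, 0 < β n) (hμ : ∀ n, 0 < μ n)
    (y : ℕ → H) (hy : MAR A B u x₀ α lam β μ y)
    (q : H) (hqA : (0:H) ∈ A q) (hqB : (0:H) ∈ B q)
    (N : ℕ) (hN1 : 1 ≤ N)
    (hN : (N:ℝ) ≥ max (max (2*‖u - q‖) ‖x₀ - q‖) ‖q‖)
    (η : ℕ → (ℕ → ℕ) → ℕ) (hηmono : MonoFunctional η)
    (hη : ∀ (k : ℕ) (f : ℕ → ℕ), Monotone f →
      ∃ n ≤ η k f, ∀ m ∈ Set.Icc n (f n),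
        ‖jA (y m) - y m‖ ≤ 1/((k:ℝ)+1) ∧ ‖jB (y m) - y m‖ ≤ 1/((k:ℝ)+1))
    (k : ℕ) (f : ℕ → ℕ) (hf : Monotone f) :
    ∃ n ≤ OmegaBound N η k f, ∃ x : H, ‖x - q‖ ≤ (N:ℝ) ∧
      ‖jA x - x‖ ≤ 1/((f n : ℝ)+1) ∧ ‖jB x - x‖ ≤ 1/((f n : ℝ)+1) ∧
      ∀ m ∈ Set.Icc n (f n), ⟪u - x, y m - x⟫ ≤ 1/((k:ℝ)+1) := by
  have hu2 : 2 * ‖u - q‖ ≤ N := (le_max_left _ _).trans ((le_max_left _ _).trans hN)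
  have hx₀ : ‖x₀ - q‖ ≤ N := (le_max_right _ _).trans ((le_max_left _ _).trans hN)
  have hyN := MAR.norm_sub_le hA hB hα hlam hβ hμ hy hqA hqB
    (by linarith [norm_nonneg (u - q)]) hx₀
  obtain ⟨m, hm, x, hxq, hxA, hxB, hx⟩ := exists_approx_projection
    (hjA.nonexpansive hA hR) (hjB.nonexpansive hB hR) (hjA.map_zero_eq hA hR hqA)
    (hjB.map_zero_eq hB hR hqB) hN1 hu2 k (fun m => f (η m f))
  obtain ⟨n, hn, hyn⟩ := hη m f hf
  have hfn : ((f n : ℕ) : ℝ) ≤ f (η m f) := by exact_mod_cast hf hn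
  have hfn' : 1 / ((f (η m f) : ℝ) + 1) ≤ 1 / ((f n : ℝ) + 1) := by gcongr
  exact ⟨n, hn.trans (hηmono _ _ f f hm fun a b hab => ⟨hf hab, hf hab⟩), x, hxq,
    hxA.trans hfn', hxB.trans hfn',
    fun i hi => hx (y i) (hyN i) (hyn i hi).1 (hyn i hi).2⟩
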